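/- arXiv:quant-ph/0412157 — 2 statements merged into one kernel-verified Lean document; each statement's English description precedes it below -/
import Mathlib

section
/- Let ρ and σ be density operators on a finite-dimensional Hilbert space. For any sequence {p_n} of orthogonal projections p_n on H^{⊗n} with liminf_{n→∞} tr(ρ^{⊗n} p_n) > 0, it holds that liminf_{n→∞} (1/n) log tr(σ^{⊗n} p_n) ≥ −S(ρ,σ), where S(ρ,σ) is the quantum relative entropy (base 2), possibly infinite. -/
open Filter
open scoped ComplexOrder Classical

/-- `n`-fold tensor power of a `d×d` matrix, realized on the index set `Fin n → Fin d`. -/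
noncomputable def tpow {d : ℕ} (ρ : Matrix (Fin d) (Fin d) ℂ) (n : ℕ) :
    Matrix (Fin n → Fin d) (Fin n → Fin d) ℂ :=
  Matrix.of fun x y => ∏ i, ρ (x i) (y i)

/-- Base-2 functional calculus logarithm of a Hermitian matrix, with the convention
`log 0 = 0` on the kernel (and junk value `0` on non-Hermitian matrices). -/
noncomputable def matLog2 {m : Type*} [Fintype m] [DecidableEq m]
    (ρ : Matrix m m ℂ) : Matrix m m ℂ :=
  if h : ρ.IsHermitian then
    (h.eigenvectorUnitary : Matrix m m ℂ) *
      Matrix.diagonal (fun i => (Real.logb 2 (h.eigenvalues i) : ℂ)) *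
      (star (h.eigenvectorUnitary : Matrix m m ℂ))
  else 0

/-- Quantum relative entropy `S(ρ,σ) = tr ρ (log ρ − log σ)` (base 2); this real-valued
formula is meaningful when `supp ρ ≤ supp σ`. -/
noncomputable def qRelEnt {m : Type*} [Fintype m] [DecidableEq m]
    (ρ σ : Matrix m m ℂ) : ℝ :=
  ((ρ * (matLog2 ρ - matLog2 σ)).trace).re

/-- Support condition `supp ρ ≤ supp σ` (for PSD matrices: `ker σ ⊆ ker ρ`). -/
def SuppLe {m : Type*} [Fintype m] (ρ σ : Matrix m m ℂ) : Prop :=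
  ∀ v, σ.mulVec v = 0 → ρ.mulVec v = 0

/-- Quantum relative entropy with value `⊤` when `supp ρ ≤ supp σ` fails. -/
noncomputable def qRelEntE {m : Type*} [Fintype m] [DecidableEq m]
    (ρ σ : Matrix m m ℂ) : EReal :=
  if SuppLe ρ σ then ((qRelEnt ρ σ : ℝ) : EReal) else ⊤

/-- Von Neumann entropy (base 2). -/
noncomputable def vNent {m : Type*} [Fintype m] [DecidableEq m]
    (ρ : Matrix m m ℂ) : ℝ :=
  if h : ρ.IsHermitian then -∑ i, (h.eigenvalues i) * Real.logb 2 (h.eigenvalues i) else 0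

/-- Density operator. -/
def IsDensity {m : Type*} [Fintype m] (ρ : Matrix m m ℂ) : Prop :=
  ρ.PosSemidef ∧ ρ.trace = 1

/-- Orthogonal projection. -/
def IsProjn {m : Type*} [Fintype m] (p : Matrix m m ℂ) : Prop :=
  p.IsHermitian ∧ p * p = p

/-- Base-2 logarithm with value `⊥` at nonpositive reals. -/
noncomputable def elog2 (t : ℝ) : EReal := if t ≤ 0 then ⊥ else ((Real.logb 2 t : ℝ) : EReal)

open Matrix

/-- Chernoff form of the weak law of large numbers on a finite alphabet. -/
theorem tendsto_sum_prod_upper_tail {ι : Type*} [Fintype ι] (w g : ι → ℝ) (hw : ∀ i, 0 ≤ w i)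
    (hw1 : ∑ i, w i = 1) {a : ℝ} (ha : ∑ i, w i * g i < a) :
    Tendsto (fun n : ℕ => ∑ x : Fin n → ι,
      if n * a < ∑ i, g (x i) then ∏ i, w (x i) else 0) atTop (nhds 0) := by
  set φ : ℝ → ℝ := fun s => ∑ i, w i * Real.exp (s * (g i - a)) with hφ
  have hφ0 : φ 0 = 1 := by simp [hφ, hw1]
  have hd : HasDerivAt φ (∑ i, w i * (Real.exp (0 * (g i - a)) * (1 * (g i - a)))) 0 := by
    apply HasDerivAt.fun_sum
    intro i _
    exact (((hasDerivAt_id (0 : ℝ)).mul_const (g i - a)).exp).const_mul (w i)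
  have hneg : ∑ i, w i * (Real.exp (0 * (g i - a)) * (1 * (g i - a))) < 0 := by
    simp only [zero_mul, Real.exp_zero, one_mul]
    simp only [mul_sub, Finset.sum_sub_distrib, ← Finset.sum_mul, hw1]
    linarith
  obtain ⟨s, hs, hlt⟩ : ∃ s, 0 < s ∧ φ s < 1 := by
    have h1 := hd.tendsto_slope_zero_right.eventually (gt_mem_nhds hneg)
    obtain ⟨s, h2, h3⟩ := (h1.and self_mem_nhdsWithin).exists
    have h3 : (0 : ℝ) < s := h3
    refine ⟨s, h3, ?_⟩
    rw [zero_add, hφ0, smul_eq_mul] at h2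
    have := (inv_mul_lt_iff₀ h3).1 h2
    linarith
  have hφs : 0 ≤ φ s := Finset.sum_nonneg fun i _ => mul_nonneg (hw i) (Real.exp_pos _).le
  refine squeeze_zero (fun n => ?_) (fun n => ?_) (tendsto_pow_atTop_nhds_zero_of_lt_one hφs hlt)
  · exact Finset.sum_nonneg fun x _ => by
      split_ifs
      exacts [Finset.prod_nonneg fun i _ => hw _, le_rfl]
  · rw [show φ s ^ n = ∑ x : Fin n → ι, ∏ i, (w (x i) * Real.exp (s * (g (x i) - a))) from
      Fintype.sum_pow _ n]
    refine Finset.sum_le_sum fun x _ => ?_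
    have hP : 0 ≤ ∏ i, w (x i) := Finset.prod_nonneg fun i _ => hw _
    rw [Finset.prod_mul_distrib, ← Real.exp_sum]
    split_ifs with hx
    · refine le_mul_of_one_le_right hP (Real.one_le_exp ?_)
      rw [← Finset.mul_sum, Finset.sum_sub_distrib]
      simp only [Finset.sum_const, Finset.card_univ, Fintype.card_fin, nsmul_eq_mul]
      exact mul_nonneg hs.le (by linarith)
    · exact mul_nonneg hP (Real.exp_pos _).le

/-- Squared Euclidean norm of a column. -/
noncomputable def colNormSq {m : Type*} [Fintype m] (M : Matrix m m ℂ) (x : m) : ℝ :=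
  ∑ z, Complex.normSq (M z x)

section ColNormSq

variable {m : Type*} [Fintype m]

theorem colNormSq_nonneg (M : Matrix m m ℂ) (x : m) : 0 ≤ colNormSq M x :=
  Finset.sum_nonneg fun _ _ => Complex.normSq_nonneg _

theorem colNormSq_eq (M : Matrix m m ℂ) (x : m) : (colNormSq M x : ℂ) = (Mᴴ * M) x x := by
  simp [colNormSq, Matrix.mul_apply, Complex.normSq_eq_conj_mul_self]

theorem colNormSq_add_le (M N : Matrix m m ℂ) (x : m) :
    colNormSq (M + N) x ≤ 2 * colNormSq M x + 2 * colNormSq N x := by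
  simp only [colNormSq, Finset.mul_sum, ← Finset.sum_add_distrib]
  refine Finset.sum_le_sum fun z _ => ?_
  simp only [Matrix.add_apply, Complex.normSq_apply, Complex.add_re, Complex.add_im]
  nlinarith [sq_nonneg ((M z x).re - (N z x).re), sq_nonneg ((M z x).im - (N z x).im)]

theorem IsProjn.colNormSq_mul_le {p : Matrix m m ℂ} (hp : IsProjn p) (M : Matrix m m ℂ) (x : m) :
    colNormSq (p * M) x ≤ colNormSq M x := by
  have hpM : (p * M)ᴴ * (p * M) = Mᴴ * p * M := by
    rw [conjTranspose_mul, hp.1.eq, Matrix.mul_assoc, ← Matrix.mul_assoc p, hp.2, Matrix.mul_assoc]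
  have hM : (M - p * M)ᴴ * (M - p * M) = Mᴴ * M - (p * M)ᴴ * (p * M) := by
    rw [hpM, conjTranspose_sub, conjTranspose_mul, hp.1.eq, Matrix.sub_mul, Matrix.mul_sub,
      Matrix.mul_sub, ← Matrix.mul_assoc, Matrix.mul_assoc Mᴴ p (p * M), ← Matrix.mul_assoc p, hp.2,
      ← Matrix.mul_assoc]
    abel
  have h : colNormSq (M - p * M) x = colNormSq M x - colNormSq (p * M) x := by
    have := congrFun (congrFun hM x) x
    rw [Matrix.sub_apply, ← colNormSq_eq, ← colNormSq_eq, ← colNormSq_eq] at this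
    exact_mod_cast this
  linarith [colNormSq_nonneg (M - p * M) x]

variable [DecidableEq m]

theorem trace_conj_diagonal_mul {p : Matrix m m ℂ} (hp : IsProjn p) (W : Matrix m m ℂ)
    (l : m → ℝ) :
    (W * diagonal (fun x => (l x : ℂ)) * Wᴴ * p).trace.re = ∑ x, l x * colNormSq (p * W) x := by
  have hpW : (p * W)ᴴ * (p * W) = Wᴴ * p * W := by
    rw [conjTranspose_mul, hp.1.eq, Matrix.mul_assoc, ← Matrix.mul_assoc p, hp.2, Matrix.mul_assoc]
  have : (W * diagonal (fun x => (l x : ℂ)) * Wᴴ * p).trace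
      = ((∑ x, l x * colNormSq (p * W) x : ℝ) : ℂ) := by
    rw [Matrix.mul_assoc, Matrix.mul_assoc, Matrix.trace_mul_comm, Matrix.mul_assoc, ← hpW]
    simp only [Matrix.trace, Matrix.diag, Matrix.diagonal_mul, ← colNormSq_eq]
    push_cast
    rfl
  rw [this, Complex.ofReal_re]

theorem sum_colNormSq_mul_unitary (M : Matrix m m ℂ) {W : Matrix m m ℂ} (hW : W * Wᴴ = 1) :
    ∑ x, colNormSq (M * W) x = ∑ x, colNormSq M x := by
  have h : ∀ N : Matrix m m ℂ, ((∑ x, colNormSq N x : ℝ) : ℂ) = (Nᴴ * N).trace := fun N => by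
    simp [Matrix.trace, colNormSq_eq]
  rw [← Complex.ofReal_inj, h, h, conjTranspose_mul, Matrix.trace_mul_comm, Matrix.mul_assoc,
    ← Matrix.mul_assoc W, hW, Matrix.one_mul, Matrix.trace_mul_comm]

/-- One-shot converse bound for a test between two states, the second one diagonal. -/
theorem trace_mul_projn_le_aux {p W : Matrix m m ℂ} (hp : IsProjn p) (hW : W * Wᴴ = 1)
    (l s : m → ℝ) (hl : ∀ x, 0 ≤ l x) (hs : ∀ x, 0 ≤ s x) {α β : ℝ} (hα : 0 ≤ α) (hβ : 0 ≤ β) :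
    β * (W * diagonal (fun x => (l x : ℂ)) * Wᴴ * p).trace.re ≤
      β * (∑ x, if α < l x then l x else 0) +
      2 * β * (∑ y, if s y < β then ∑ x, l x * Complex.normSq (W y x) else 0) +
      2 * α * (diagonal (fun x => (s x : ℂ)) * p).trace.re := by
  set R : Matrix m m ℂ := diagonal fun y => if s y < β then 0 else 1 with hR
  set R' : Matrix m m ℂ := diagonal fun y => if s y < β then 1 else 0 with hR'
  have hRR : R + R' = 1 := by
    rw [hR, hR', diagonal_add, ← diagonal_one]
    congr 1; funext y; split_ifs <;> simp
  have hdec : p * W = p * R * W + p * (R' * W) := by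
    rw [← Matrix.mul_assoc, ← Matrix.add_mul, ← Matrix.mul_add, hRR, Matrix.mul_one]
  have hW' : Wᴴ * W = 1 := mul_eq_one_comm.1 hW
  have hcolW : ∀ x, colNormSq (p * W) x ≤ 1 := fun x => by
    refine (hp.colNormSq_mul_le W x).trans_eq ?_
    rw [← Complex.ofReal_inj, colNormSq_eq, hW']; simp
  have hpt : ∀ x, l x * colNormSq (p * W) x ≤ (if α < l x then l x else 0) +
      2 * (l x * colNormSq (R' * W) x) + 2 * α * colNormSq (p * R * W) x := fun x => by
    have h1 := colNormSq_nonneg (R' * W) x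
    have h2 := colNormSq_nonneg (p * R * W) x
    have h3 := mul_nonneg (hl x) h1
    have h4 := mul_nonneg hα h2
    split_ifs with hx
    · nlinarith [mul_le_mul_of_nonneg_left (hcolW x) (hl x)]
    · have h5 : colNormSq (p * W) x ≤ 2 * colNormSq (p * R * W) x + 2 * colNormSq (R' * W) x := by
        rw [hdec]
        refine (colNormSq_add_le _ _ x).trans ?_
        linarith [hp.colNormSq_mul_le (R' * W) x]
      nlinarith [mul_le_mul_of_nonneg_left h5 (hl x),
        mul_le_mul_of_nonneg_right (not_lt.1 hx) h2]
  have hR'W : ∑ x, l x * colNormSq (R' * W) x =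
      ∑ y, if s y < β then ∑ x, l x * Complex.normSq (W y x) else 0 := by
    simp only [colNormSq, hR', Matrix.diagonal_mul, Finset.mul_sum]
    rw [Finset.sum_comm]
    refine Finset.sum_congr rfl fun y _ => ?_
    split_ifs <;> simp
  have hsum : β * ∑ x, colNormSq (p * R * W) x ≤ (diagonal (fun x => (s x : ℂ)) * p).trace.re := by
    have := trace_conj_diagonal_mul hp 1 s
    rw [Matrix.one_mul, conjTranspose_one, Matrix.mul_one, Matrix.mul_one] at this
    rw [this, sum_colNormSq_mul_unitary _ hW, Finset.mul_sum]
    refine Finset.sum_le_sum fun y _ => ?_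
    have hc := colNormSq_nonneg p y
    by_cases hy : s y < β
    · have : colNormSq (p * R) y = 0 := by simp [colNormSq, hR, hy]
      rw [this, mul_zero]
      exact mul_nonneg (hs y) hc
    · have : colNormSq (p * R) y = colNormSq p y := by simp [colNormSq, hR, hy]
      rw [this]
      exact mul_le_mul_of_nonneg_right (not_lt.1 hy) hc
  have htot := Finset.sum_le_sum fun x (_ : x ∈ Finset.univ) => hpt x
  rw [Finset.sum_add_distrib, Finset.sum_add_distrib, ← Finset.mul_sum, ← Finset.mul_sum,
    hR'W] at htot
  rw [trace_conj_diagonal_mul hp]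
  nlinarith [mul_le_mul_of_nonneg_left htot hβ, mul_le_mul_of_nonneg_left hsum hα]

/-- One-shot converse bound for a test between two states given by spectral decompositions. -/
theorem trace_mul_projn_le {p U V : Matrix m m ℂ} (hp : IsProjn p) (hU : U * Uᴴ = 1)
    (hV : V * Vᴴ = 1) (l s : m → ℝ) (hl : ∀ x, 0 ≤ l x) (hs : ∀ x, 0 ≤ s x) {α β : ℝ}
    (hα : 0 ≤ α) (hβ : 0 ≤ β) :
    β * (U * diagonal (fun x => (l x : ℂ)) * Uᴴ * p).trace.re ≤
      β * (∑ x, if α < l x then l x else 0) +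
      2 * β * (∑ y, if s y < β then ∑ x, l x * Complex.normSq ((Vᴴ * U) y x) else 0) +
      2 * α * (V * diagonal (fun x => (s x : ℂ)) * Vᴴ * p).trace.re := by
  have hV' : Vᴴ * V = 1 := mul_eq_one_comm.1 hV
  have hp' : IsProjn (Vᴴ * p * V) := by
    refine ⟨?_, ?_⟩
    · simp [Matrix.IsHermitian, conjTranspose_mul, hp.1.eq, Matrix.mul_assoc]
    · calc Vᴴ * p * V * (Vᴴ * p * V) = Vᴴ * p * (V * Vᴴ) * p * V := by simp only [Matrix.mul_assoc]
        _ = Vᴴ * (p * p) * V := by rw [hV, Matrix.mul_one, Matrix.mul_assoc Vᴴ p p]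
        _ = Vᴴ * p * V := by rw [hp.2]
  have hW : (Vᴴ * U) * (Vᴴ * U)ᴴ = 1 := by
    rw [conjTranspose_mul, conjTranspose_conjTranspose, Matrix.mul_assoc, ← Matrix.mul_assoc U, hU,
      Matrix.one_mul, hV']
  have h := trace_mul_projn_le_aux hp' hW l s hl hs hα hβ
  have e1 : (Vᴴ * U * diagonal (fun x => (l x : ℂ)) * (Vᴴ * U)ᴴ * (Vᴴ * p * V)).trace =
      (U * diagonal (fun x => (l x : ℂ)) * Uᴴ * p).trace := by
    rw [conjTranspose_mul, conjTranspose_conjTranspose, ← Matrix.mul_assoc, Matrix.trace_mul_comm]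
    congr 1
    calc V * (Vᴴ * U * diagonal (fun x => (l x : ℂ)) * (Uᴴ * V) * (Vᴴ * p))
        = (V * Vᴴ) * U * diagonal (fun x => (l x : ℂ)) * Uᴴ * (V * Vᴴ) * p := by
          simp only [Matrix.mul_assoc]
      _ = _ := by rw [hV, Matrix.one_mul, Matrix.mul_one]
  have e2 : (diagonal (fun x => (s x : ℂ)) * (Vᴴ * p * V)).trace =
      (V * diagonal (fun x => (s x : ℂ)) * Vᴴ * p).trace := by
    rw [← Matrix.mul_assoc, Matrix.trace_mul_comm]
    simp only [Matrix.mul_assoc]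
  rwa [e1, e2] at h

end ColNormSq

section TensorPower

variable {d : ℕ}

theorem tpow_mul (A B : Matrix (Fin d) (Fin d) ℂ) (n : ℕ) :
    tpow (A * B) n = tpow A n * tpow B n := by
  ext x y
  simp only [tpow, Matrix.of_apply, Matrix.mul_apply]
  rw [Finset.prod_univ_sum, Fintype.piFinset_univ]
  simp only [Finset.prod_mul_distrib]

theorem tpow_conjTranspose (A : Matrix (Fin d) (Fin d) ℂ) (n : ℕ) :
    tpow Aᴴ n = (tpow A n)ᴴ := by
  ext x y
  simp [tpow]

theorem tpow_diagonal (l : Fin d → ℂ) (n : ℕ) :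
    tpow (diagonal l) n = diagonal fun x => ∏ i, l (x i) := by
  ext x y
  simp only [tpow, Matrix.of_apply, Matrix.diagonal_apply]
  by_cases h : x = y
  · simp [h]
  · rw [if_neg h]
    obtain ⟨i, hi⟩ := Function.ne_iff.1 h
    exact Finset.prod_eq_zero (Finset.mem_univ i) (if_neg hi)

theorem tpow_one (n : ℕ) : tpow (1 : Matrix (Fin d) (Fin d) ℂ) n = 1 := by
  rw [← diagonal_one, tpow_diagonal, ← diagonal_one]
  simp

end TensorPower

section Spectral

variable {m : Type*} [Fintype m] [DecidableEq m]

theorem conj_diagonal_apply_self (W : Matrix m m ℂ) (l : m → ℝ) (j : m) :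
    (W * diagonal (fun k => (l k : ℂ)) * Wᴴ) j j =
      ((∑ k, l k * Complex.normSq (W j k) : ℝ) : ℂ) := by
  rw [Matrix.mul_apply]
  push_cast
  refine Finset.sum_congr rfl fun k _ => ?_
  rw [Matrix.mul_diagonal, conjTranspose_apply, Complex.normSq_eq_conj_mul_self]
  simp only [Complex.star_def]
  ring

theorem trace_conj_diagonal_mul_conj_diagonal (U V : Matrix m m ℂ) (l b : m → ℝ) :
    (U * diagonal (fun k => (l k : ℂ)) * Uᴴ * (V * diagonal (fun k => (b k : ℂ)) * Vᴴ)).trace =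
      ((∑ j, (∑ k, l k * Complex.normSq ((Vᴴ * U) j k)) * b j : ℝ) : ℂ) := by
  have h : (U * diagonal (fun k => (l k : ℂ)) * Uᴴ *
      (V * diagonal (fun k => (b k : ℂ)) * Vᴴ)).trace =
      (Vᴴ * U * diagonal (fun k => (l k : ℂ)) * (Vᴴ * U)ᴴ *
        diagonal (fun k => (b k : ℂ))).trace := by
    rw [← Matrix.mul_assoc, Matrix.trace_mul_comm, conjTranspose_mul, conjTranspose_conjTranspose]
    simp only [Matrix.mul_assoc]
  rw [h, Matrix.trace, Complex.ofReal_sum]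
  refine Finset.sum_congr rfl fun j _ => ?_
  rw [Matrix.diag_apply, Matrix.mul_diagonal, conj_diagonal_apply_self, Complex.ofReal_mul]

theorem Matrix.IsHermitian.eq_conj_diagonal {A : Matrix m m ℂ} (hA : A.IsHermitian) :
    A = (hA.eigenvectorUnitary : Matrix m m ℂ) * diagonal (fun k => (hA.eigenvalues k : ℂ)) *
      (hA.eigenvectorUnitary : Matrix m m ℂ)ᴴ :=
  hA.spectral_theorem

theorem Matrix.IsHermitian.eigenvectorUnitary_mul_conjTranspose {A : Matrix m m ℂ}
    (hA : A.IsHermitian) :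
    (hA.eigenvectorUnitary : Matrix m m ℂ) * (hA.eigenvectorUnitary : Matrix m m ℂ)ᴴ = 1 :=
  Unitary.coe_mul_star_self _

theorem sum_mul_normSq_one (l : m → ℝ) (j : m) :
    ∑ k, l k * Complex.normSq ((1 : Matrix m m ℂ) j k) = l j := by
  rw [Finset.sum_eq_single j] <;> simp +contextual [eq_comm]

theorem qRelEnt_eq {ρ σ : Matrix m m ℂ} (hρ : ρ.IsHermitian) (hσ : σ.IsHermitian) :
    qRelEnt ρ σ = ∑ k, hρ.eigenvalues k * Real.logb 2 (hρ.eigenvalues k) -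
      ∑ j, (∑ k, hρ.eigenvalues k * Complex.normSq
        (((hσ.eigenvectorUnitary : Matrix m m ℂ)ᴴ * (hρ.eigenvectorUnitary : Matrix m m ℂ)) j k)) *
          Real.logb 2 (hσ.eigenvalues j) := by
  have h1 : (ρ * matLog2 ρ).trace =
      ((∑ k, hρ.eigenvalues k * Real.logb 2 (hρ.eigenvalues k) : ℝ) : ℂ) := by
    have := trace_conj_diagonal_mul_conj_diagonal (hρ.eigenvectorUnitary : Matrix m m ℂ)
      hρ.eigenvectorUnitary hρ.eigenvalues fun k => Real.logb 2 (hρ.eigenvalues k)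
    rw [← hρ.eq_conj_diagonal, mul_eq_one_comm.1 hρ.eigenvectorUnitary_mul_conjTranspose] at this
    simp only [sum_mul_normSq_one] at this
    rw [matLog2, dif_pos hρ]
    exact this
  have h2 := trace_conj_diagonal_mul_conj_diagonal (hρ.eigenvectorUnitary : Matrix m m ℂ)
    hσ.eigenvectorUnitary hρ.eigenvalues fun k => Real.logb 2 (hσ.eigenvalues k)
  rw [← hρ.eq_conj_diagonal] at h2
  rw [show _ * diagonal _ * _ = matLog2 σ by rw [matLog2, dif_pos hσ]; rfl] at h2
  rw [qRelEnt, Matrix.mul_sub, Matrix.trace_sub, h1, h2, Complex.sub_re, Complex.ofReal_re,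
    Complex.ofReal_re]

theorem sum_pinching_eq_trace {ρ V : Matrix m m ℂ} (hρ : ρ.IsHermitian) (hV : V * Vᴴ = 1) :
    ((∑ j, ∑ k, hρ.eigenvalues k * Complex.normSq
      ((Vᴴ * (hρ.eigenvectorUnitary : Matrix m m ℂ)) j k) : ℝ) : ℂ) = ρ.trace := by
  have h := trace_conj_diagonal_mul_conj_diagonal (hρ.eigenvectorUnitary : Matrix m m ℂ)
    V hρ.eigenvalues fun _ => 1
  simp only [Complex.ofReal_one, diagonal_one, hV, mul_one,
    ← hρ.eq_conj_diagonal] at h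
  exact h.symm

theorem SuppLe.pinching_eq_zero {ρ σ : Matrix m m ℂ} (h : SuppLe ρ σ) (hρ : ρ.IsHermitian)
    (hσ : σ.IsHermitian) {j : m} (hj : hσ.eigenvalues j = 0) :
    ∑ k, hρ.eigenvalues k * Complex.normSq
      (((hσ.eigenvectorUnitary : Matrix m m ℂ)ᴴ *
        (hρ.eigenvectorUnitary : Matrix m m ℂ)) j k) = 0 := by
  set V := (hσ.eigenvectorUnitary : Matrix m m ℂ)
  set U := (hρ.eigenvectorUnitary : Matrix m m ℂ)
  have hσv : σ *ᵥ (V.col j) = 0 := by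
    have := hσ.mulVec_eigenvectorBasis j
    rw [hj, zero_smul] at this
    rwa [Matrix.IsHermitian.eigenvectorUnitary_col_eq]
  have hρv := h _ hσv
  have hcol : ∀ x, (ρ * V) x j = 0 := fun x => congrFun hρv x
  rw [← Complex.ofReal_eq_zero, ← conj_diagonal_apply_self]
  have : Vᴴ * U * diagonal (fun k => (hρ.eigenvalues k : ℂ)) * (Vᴴ * U)ᴴ = Vᴴ * (ρ * V) := by
    conv_rhs => rw [hρ.eq_conj_diagonal]
    rw [conjTranspose_mul, conjTranspose_conjTranspose]
    simp only [Matrix.mul_assoc]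
    rfl
  rw [this, Matrix.mul_apply]
  simp [hcol]

end Spectral

theorem tpow_conj_diagonal {d : ℕ} (U : Matrix (Fin d) (Fin d) ℂ) (l : Fin d → ℝ) (n : ℕ) :
    tpow (U * diagonal (fun k => (l k : ℂ)) * Uᴴ) n =
      tpow U n * diagonal (fun x => ((∏ i, l (x i) : ℝ) : ℂ)) * (tpow U n)ᴴ := by
  rw [tpow_mul, tpow_mul, tpow_conjTranspose, tpow_diagonal]
  simp

theorem tpow_mul_conjTranspose {d : ℕ} {U : Matrix (Fin d) (Fin d) ℂ} (hU : U * Uᴴ = 1) (n : ℕ) :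
    tpow U n * (tpow U n)ᴴ = 1 := by
  rw [← tpow_conjTranspose, ← tpow_mul, hU, tpow_one]

theorem sum_prod_mul_normSq_tpow {d : ℕ} (U V : Matrix (Fin d) (Fin d) ℂ) (l : Fin d → ℝ) (n : ℕ)
    (y : Fin n → Fin d) :
    ∑ x : Fin n → Fin d, (∏ i, l (x i)) * Complex.normSq (((tpow V n)ᴴ * tpow U n) y x) =
      ∏ i, ∑ k, l k * Complex.normSq ((Vᴴ * U) (y i) k) := by
  rw [Finset.prod_univ_sum, Fintype.piFinset_univ]
  refine Finset.sum_congr rfl fun x _ => ?_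
  rw [← tpow_conjTranspose, ← tpow_mul, Finset.prod_mul_distrib]
  congr 1
  simp only [tpow, Matrix.of_apply, map_prod]

theorem logb_prod_of_pos {ι : Type*} [Fintype ι] (f : ι → ℝ) (hf : ∀ i, 0 < f i) :
    Real.logb 2 (∏ i, f i) = ∑ i, Real.logb 2 (f i) :=
  Real.logb_prod _ _ fun i _ => (hf i).ne'

theorem tendsto_sum_atypical_large {ι : Type*} [Fintype ι] (l : ι → ℝ) (hl : ∀ i, 0 ≤ l i)
    (hl1 : ∑ i, l i = 1) {a : ℝ} (ha : ∑ i, l i * Real.logb 2 (l i) < a) :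
    Tendsto (fun n : ℕ => ∑ x : Fin n → ι,
      if (2 : ℝ) ^ (n * a) < ∏ i, l (x i) then ∏ i, l (x i) else 0) atTop (nhds 0) := by
  refine squeeze_zero (fun n => ?_) (fun n => ?_)
    (tendsto_sum_prod_upper_tail l (fun i => Real.logb 2 (l i)) hl hl1 ha)
  · refine Finset.sum_nonneg fun x _ => ?_
    split_ifs
    exacts [Finset.prod_nonneg fun i _ => hl _, le_rfl]
  · refine Finset.sum_le_sum fun x _ => ?_
    have hP : 0 ≤ ∏ i, l (x i) := Finset.prod_nonneg fun i _ => hl _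
    split_ifs with h1 h2 h2
    · exact le_rfl
    · refine absurd ?_ h2
      have h0 : 0 < ∏ i, l (x i) := (Real.rpow_pos_of_pos two_pos _).trans h1
      rw [← logb_prod_of_pos _ fun i => (hl _).lt_of_ne'
        (Finset.prod_ne_zero_iff.1 h0.ne' i (Finset.mem_univ i))]
      exact (Real.lt_logb_iff_rpow_lt one_lt_two h0).2 h1
    · exact hP
    · exact le_rfl

theorem tendsto_sum_atypical_small {ι : Type*} [Fintype ι] (v s : ι → ℝ) (hv : ∀ i, 0 ≤ v i)
    (hv1 : ∑ i, v i = 1) (hs : ∀ i, 0 ≤ s i) (hsv : ∀ i, s i = 0 → v i = 0) {a : ℝ}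
    (ha : a < ∑ i, v i * Real.logb 2 (s i)) :
    Tendsto (fun n : ℕ => ∑ y : Fin n → ι,
      if ∏ i, s (y i) < (2 : ℝ) ^ (n * a) then ∏ i, v (y i) else 0) atTop (nhds 0) := by
  refine squeeze_zero (fun n => ?_) (fun n => ?_)
    (tendsto_sum_prod_upper_tail v (fun i => -Real.logb 2 (s i)) hv hv1 (a := -a) ?_)
  · refine Finset.sum_nonneg fun x _ => ?_
    split_ifs
    exacts [Finset.prod_nonneg fun i _ => hv _, le_rfl]
  · refine Finset.sum_le_sum fun y _ => ?_
    have hP : 0 ≤ ∏ i, v (y i) := Finset.prod_nonneg fun i _ => hv _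
    split_ifs with h1 h2 h2
    · exact le_rfl
    · refine le_of_eq ?_
      by_contra h0
      refine h2 ?_
      have hpos : ∀ i, 0 < s (y i) := fun i => (hs _).lt_of_ne' fun h =>
        Finset.prod_ne_zero_iff.1 h0 i (Finset.mem_univ i) (hsv _ h)
      rw [Finset.sum_neg_distrib, ← logb_prod_of_pos _ hpos, mul_neg, neg_lt_neg_iff]
      exact (Real.logb_lt_iff_lt_rpow one_lt_two (Finset.prod_pos fun i _ => hpos i)).2 h1
    · exact hP
    · exact le_rfl
  · simpa using ha

/-- Strong converse bound for the error exponent, in terms of spectral decompositions. -/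
theorem eventually_le_logb_trace_mul {d : ℕ} {U V : Matrix (Fin d) (Fin d) ℂ} (hU : U * Uᴴ = 1)
    (hV : V * Vᴴ = 1) (l s v : Fin d → ℝ) (hl : ∀ k, 0 ≤ l k) (hs : ∀ k, 0 ≤ s k)
    (hl1 : ∑ k, l k = 1) (hv : ∀ j, v j = ∑ k, l k * Complex.normSq ((Vᴴ * U) j k))
    (hv1 : ∑ j, v j = 1) (hsv : ∀ j, s j = 0 → v j = 0)
    {p : (n : ℕ) → Matrix (Fin n → Fin d) (Fin n → Fin d) ℂ} (hp : ∀ n, IsProjn (p n))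
    {c : ℝ} (hc : 0 < c)
    (hcp : ∀ᶠ n in atTop,
      c < (tpow (U * diagonal (fun k => (l k : ℂ)) * Uᴴ) n * p n).trace.re)
    {b : ℝ} (hb : b < ∑ j, v j * Real.logb 2 (s j) - ∑ k, l k * Real.logb 2 (l k)) :
    ∀ᶠ n : ℕ in atTop,
      0 < (tpow (V * diagonal (fun k => (s k : ℂ)) * Vᴴ) n * p n).trace.re ∧
      b ≤ Real.logb 2 (tpow (V * diagonal (fun k => (s k : ℂ)) * Vᴴ) n * p n).trace.re *
        (n : ℝ)⁻¹ := by
  set A := ∑ k, l k * Real.logb 2 (l k)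
  set T := ∑ j, v j * Real.logb 2 (s j)
  obtain ⟨ε, hε, hbε⟩ : ∃ ε, 0 < ε ∧ b = T - A - 4 * ε := ⟨(T - A - b) / 4, by linarith, by ring⟩
  have hv0 : ∀ j, 0 ≤ v j := fun j => by
    rw [hv]
    exact Finset.sum_nonneg fun k _ => mul_nonneg (hl k) (Complex.normSq_nonneg _)
  have hE₁ := (tendsto_sum_atypical_large l hl hl1 (a := A + ε) (by linarith)).eventually
    (gt_mem_nhds (show 0 < c / 4 by positivity))
  have hE₂ := (tendsto_sum_atypical_small v s hv0 hv1 hs hsv (a := T - ε) (by linarith)).eventually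
    (gt_mem_nhds (show 0 < c / 8 by positivity))
  have hlarge : ∀ᶠ n : ℕ in atTop, -Real.logb 2 (c / 4) ≤ n * (2 * ε) :=
    (tendsto_natCast_atTop_atTop.atTop_mul_const (by positivity)).eventually_ge_atTop _
  filter_upwards [hcp, hE₁, hE₂, hlarge, eventually_gt_atTop 0] with n h0 h1 h2 h3 h4
  have hn : (0 : ℝ) < n := by exact_mod_cast h4
  have hα : (0 : ℝ) < 2 ^ (n * (A + ε)) := Real.rpow_pos_of_pos two_pos _
  have hβ : (0 : ℝ) < 2 ^ (n * (T - ε)) := Real.rpow_pos_of_pos two_pos _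
  have key := trace_mul_projn_le (hp n) (tpow_mul_conjTranspose hU n) (tpow_mul_conjTranspose hV n)
    (fun x => ∏ i, l (x i)) (fun x => ∏ i, s (x i)) (fun x => Finset.prod_nonneg fun i _ => hl _)
    (fun x => Finset.prod_nonneg fun i _ => hs _) hα.le hβ.le
  simp only [sum_prod_mul_normSq_tpow, ← hv] at key
  rw [← tpow_conj_diagonal, ← tpow_conj_diagonal] at key
  set t := (tpow (V * diagonal (fun k => (s k : ℂ)) * Vᴴ) n * p n).trace.re
  have hle : c / 4 * 2 ^ (n * (T - ε)) ≤ 2 ^ (n * (A + ε)) * t := by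
    nlinarith [mul_lt_mul_of_pos_left h0 hβ, mul_lt_mul_of_pos_left h1 hβ,
      mul_lt_mul_of_pos_left h2 hβ]
  have ht : 0 < t := pos_of_mul_pos_right ((by positivity : (0 : ℝ) < _).trans_le hle) hα.le
  refine ⟨ht, ?_⟩
  have hlog := Real.logb_le_logb_of_le one_lt_two (by positivity) hle
  rw [Real.logb_mul (by positivity) hβ.ne', Real.logb_mul hα.ne' ht.ne',
    Real.logb_rpow two_pos (by norm_num), Real.logb_rpow two_pos (by norm_num)] at hlog
  rw [← div_eq_mul_inv, le_div_iff₀ hn, hbε]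
  linarith

theorem IsDensity.trace_tpow_mul_projn_nonneg {d : ℕ} {ρ : Matrix (Fin d) (Fin d) ℂ}
    (hρ : IsDensity ρ) {n : ℕ} {p : Matrix (Fin n → Fin d) (Fin n → Fin d) ℂ} (hp : IsProjn p) :
    0 ≤ (tpow ρ n * p).trace.re := by
  rw [hρ.1.1.eq_conj_diagonal, tpow_conj_diagonal, trace_conj_diagonal_mul hp]
  exact Finset.sum_nonneg fun x _ => mul_nonneg
    (Finset.prod_nonneg fun i _ => hρ.1.eigenvalues_nonneg _) (colNormSq_nonneg _ _)

/-- Quantum Stein lower bound: if `liminf tr(ρ^{⊗n} pₙ) > 0` for a sequence of projections,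
then `liminf (1/n) log tr(σ^{⊗n} pₙ) ≥ −S(ρ,σ)` (in `EReal`, `S` possibly infinite). -/
theorem quantum_stein_lower_bound (d : ℕ) (ρ σ : Matrix (Fin d) (Fin d) ℂ)
    (hρ : IsDensity ρ) (hσ : IsDensity σ)
    (p : (n : ℕ) → Matrix (Fin n → Fin d) (Fin n → Fin d) ℂ)
    (hp : ∀ n, IsProjn (p n))
    (h : 0 < Filter.liminf (fun n : ℕ => ((tpow ρ n * p n).trace).re) atTop) :
    -(qRelEntE ρ σ) ≤
      Filter.liminf
        (fun n : ℕ => elog2 (((tpow σ n * p n).trace).re) * (((n : ℝ)⁻¹ : ℝ) : EReal))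
        atTop := by

  by_cases hsupp : SuppLe ρ σ
  swap
  · simp [qRelEntE, hsupp]
  rw [qRelEntE, if_pos hsupp, ← EReal.coe_neg, ← EReal.ge_of_forall_gt_iff_ge]
  intro b hb
  rw [EReal.coe_lt_coe_iff, qRelEnt_eq hρ.1.1 hσ.1.1, neg_sub] at hb
  obtain ⟨c, hc, hcl⟩ := exists_between h
  have hcp := eventually_lt_of_lt_liminf hcl
    (isBoundedUnder_of ⟨0, fun n => hρ.trace_tpow_mul_projn_nonneg (hp n)⟩)
  have hU := hρ.1.1.eigenvectorUnitary_mul_conjTranspose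
  have hV := hσ.1.1.eigenvectorUnitary_mul_conjTranspose
  have hl1 : ∑ k, hρ.1.1.eigenvalues k = 1 := by
    have := (sum_pinching_eq_trace hρ.1.1 hU).trans hρ.2
    rw [mul_eq_one_comm.1 hU] at this
    simpa only [sum_mul_normSq_one, Complex.ofReal_eq_one] using this
  have hv1 := Complex.ofReal_eq_one.1 ((sum_pinching_eq_trace hρ.1.1 hV).trans hρ.2)
  rw [hρ.1.1.eq_conj_diagonal] at hcp
  have := eventually_le_logb_trace_mul hU hV _ _ _ hρ.1.eigenvalues_nonneg
    hσ.1.eigenvalues_nonneg hl1 (fun _ => rfl) hv1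
    (fun j hj => hsupp.pinching_eq_zero hρ.1.1 hσ.1.1 hj) hp hc hcp hb
  rw [← hσ.1.1.eq_conj_diagonal] at this
  refine le_liminf_of_le (by isBoundedDefault) (this.mono fun n hn => ?_)
  rw [elog2, if_neg (not_le.2 hn.1), ← EReal.coe_mul, EReal.coe_le_coe_iff]
  exact hn.2
end

section
/- Let ρ, σ be density operators on a d-dimensional Hilbert space H, let l ∈ ℕ, and let D be the abelian subalgebra of B(H^{⊗l}) generated by the spectral projections {e_{l₁,…,l_d}} of σ^{⊗l} together with the pinched operators {e_{l₁,…,l_d} ρ^{⊗l} e_{l₁,…,l_d}}. Then the relative entropy of the restrictions satisfies S(ρ^{⊗l}↾D, σ^{⊗l}↾D) ≥ l·S(ρ,σ) − d·log(l+1). In particular (1/l)·S(ρ^{⊗l}↾D, σ^{⊗l}↾D) → S(ρ,σ) as l → ∞. -/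
open Filter
open scoped ComplexOrder Classical

/-- The spectral projection `e_{l₁,…,l_d}` of `σ^{⊗l}` associated with a composition
`c : Fin d → Fin (l+1)`, built from the one-site eigenprojections `e`. -/
noncomputable def specProj {d : ℕ} (e : Fin d → Matrix (Fin d) (Fin d) ℂ) (l : ℕ)
    (c : Fin d → Fin (l + 1)) : Matrix (Fin l → Fin d) (Fin l → Fin d) ℂ :=
  ∑ i ∈ Finset.univ.filter
      (fun i : Fin l → Fin d => ∀ k, (Finset.univ.filter fun j => i j = k).card = (c k : ℕ)),
    Matrix.of fun x y => ∏ j, e (i j) (x j) (y j)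

/-- The abelian subalgebra `D_{l,ρ}` generated by the spectral projections of `σ^{⊗l}`
together with the pinched operators `e ρ^{⊗l} e`. -/
noncomputable def pinchAlg {d : ℕ} (e : Fin d → Matrix (Fin d) (Fin d) ℂ)
    (ρ : Matrix (Fin d) (Fin d) ℂ) (l : ℕ) :
    Subalgebra ℂ (Matrix (Fin l → Fin d) (Fin l → Fin d) ℂ) :=
  Algebra.adjoin ℂ
    ({M | ∃ c : Fin d → Fin (l + 1), M = specProj e l c} ∪
     {M | ∃ c : Fin d → Fin (l + 1), M = specProj e l c * tpow ρ l * specProj e l c})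

section LogCalculus

variable {m : Type*} [Fintype m] [DecidableEq m]

lemma matLog2_isHermitian {A : Matrix m m ℂ} (hA : A.IsHermitian) : (matLog2 A).IsHermitian := by
  rw [matLog2, dif_pos hA]
  refine Matrix.isHermitian_mul_mul_conjTranspose _ ?_
  rw [Matrix.isHermitian_diagonal_iff]
  intro i
  simp [IsSelfAdjoint]

/-- The logarithm acts on eigenvectors (the columns of `X`) by the logarithm of the eigenvalue. -/
lemma matLog2_mul_of_mul_eq {n : Type*} [Fintype n] [DecidableEq n] {A : Matrix m m ℂ}
    (hA : A.IsHermitian) {X : Matrix m n ℂ} {a : n → ℝ}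
    (h : A * X = X * Matrix.diagonal (fun j => (a j : ℂ))) :
    matLog2 A * X = X * Matrix.diagonal (fun j => (Real.logb 2 (a j) : ℂ)) := by
  set W : Matrix m m ℂ := (hA.eigenvectorUnitary : Matrix m m ℂ) with hW
  have hW1 : W * star W = 1 := Unitary.coe_mul_star_self _
  have hW2 : star W * W = 1 := Unitary.coe_star_mul_self _
  have hAW : star W * A = Matrix.diagonal (fun i => (hA.eigenvalues i : ℂ)) * star W := by
    have := hA.spectral_theorem
    rw [Unitary.conjStarAlgAut_apply] at this
    conv_lhs => rw [this]
    rw [← mul_assoc, ← mul_assoc, ← hW, hW2, one_mul]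
    rfl
  have hentry : ∀ i j, (hA.eigenvalues i : ℂ) * (star W * X) i j = (star W * X) i j * (a j : ℂ) := by
    intro i j
    have h1 : Matrix.diagonal (fun i => (hA.eigenvalues i : ℂ)) * (star W * X)
        = (star W * X) * Matrix.diagonal (fun j => (a j : ℂ)) := by
      rw [← Matrix.mul_assoc, ← hAW, Matrix.mul_assoc, h, Matrix.mul_assoc]
    have h2 := congrFun (congrFun h1 i) j
    rwa [Matrix.diagonal_mul, Matrix.mul_diagonal] at h2
  have hlog : Matrix.diagonal (fun i => (Real.logb 2 (hA.eigenvalues i) : ℂ)) * (star W * X)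
      = (star W * X) * Matrix.diagonal (fun j => (Real.logb 2 (a j) : ℂ)) := by
    ext i j
    rw [Matrix.diagonal_mul, Matrix.mul_diagonal]
    by_cases hz : (star W * X) i j = 0
    · simp [hz]
    · have : (hA.eigenvalues i : ℂ) = a j :=
        mul_right_cancel₀ hz ((hentry i j).trans (mul_comm _ _))
      rw [Complex.ofReal_inj.mp this, mul_comm]
  rw [matLog2, dif_pos hA, ← hW, Matrix.mul_assoc, Matrix.mul_assoc, hlog, ← Matrix.mul_assoc,
    ← Matrix.mul_assoc, hW1, Matrix.one_mul]

lemma exists_eigenbasis {A : Matrix m m ℂ} (hA : A.IsHermitian) :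
    ∃ U ∈ Matrix.unitaryGroup m ℂ,
      A * U = U * Matrix.diagonal (fun i => (hA.eigenvalues i : ℂ)) := by
  refine ⟨hA.eigenvectorUnitary, hA.eigenvectorUnitary.2, ?_⟩
  have := hA.spectral_theorem
  rw [Unitary.conjStarAlgAut_apply] at this
  refine (congrArg (· * (hA.eigenvectorUnitary : Matrix m m ℂ)) this).trans ?_
  rw [mul_assoc, Unitary.coe_star_mul_self, mul_one]
  rfl

lemma matLog2_commute {A P : Matrix m m ℂ} (hA : A.IsHermitian) (h : Commute A P) :
    Commute (matLog2 A) P := by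
  obtain ⟨W, hW, hAW⟩ := exists_eigenbasis hA
  have h1 : A * (P * W) = (P * W) * Matrix.diagonal (fun i => (hA.eigenvalues i : ℂ)) := by
    rw [← mul_assoc, h.eq, mul_assoc, hAW, mul_assoc]
  have h2 := matLog2_mul_of_mul_eq hA h1
  have h3 := matLog2_mul_of_mul_eq hA hAW
  have h4 : matLog2 A * P * W = P * matLog2 A * W := by
    rw [mul_assoc, h2, mul_assoc, mul_assoc, h3]
  have h5 := congrArg (· * star W) h4
  rw [commute_iff_eq]
  simpa [mul_assoc, Matrix.mem_unitaryGroup_iff.mp hW] using h5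

lemma sum_norm_sq_row {W : Matrix m m ℂ} (hW : W ∈ Matrix.unitaryGroup m ℂ) (i : m) :
    ∑ j, ‖W i j‖ ^ 2 = 1 := by
  have h := congrFun (congrFun (Matrix.mem_unitaryGroup_iff.mp hW) i) i
  simp only [Matrix.mul_apply, Matrix.star_apply, Matrix.one_apply_eq] at h
  have : ((∑ j, ‖W i j‖ ^ 2 : ℝ) : ℂ) = 1 := by
    rw [← h]
    push_cast
    exact Finset.sum_congr rfl fun j _ => (Complex.mul_conj' _).symm
  exact_mod_cast this

/-- Relative entropy as a classical double sum over eigenbases of the two arguments. -/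
lemma qRelEnt_eq_sum {A B U V : Matrix m m ℂ} {a b : m → ℝ}
    (hA : A.IsHermitian) (hB : B.IsHermitian)
    (hU : U ∈ Matrix.unitaryGroup m ℂ) (hV : V ∈ Matrix.unitaryGroup m ℂ)
    (hAU : A * U = U * Matrix.diagonal (fun i => (a i : ℂ)))
    (hBV : B * V = V * Matrix.diagonal (fun i => (b i : ℂ))) :
    qRelEnt A B = ∑ i, ∑ j, a i * ‖(star U * V) i j‖ ^ 2 *
      (Real.logb 2 (a i) - Real.logb 2 (b j)) := by
  have hU1 := Matrix.mem_unitaryGroup_iff.mp hU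
  have hV1 := Matrix.mem_unitaryGroup_iff.mp hV
  have hLA := matLog2_mul_of_mul_eq hA hAU
  have hLB := matLog2_mul_of_mul_eq hB hBV
  have hLA' : star U * matLog2 A
      = Matrix.diagonal (fun i => (Real.logb 2 (a i) : ℂ)) * star U := by
    have h := congrArg Matrix.conjTranspose hLA
    rw [Matrix.conjTranspose_mul, Matrix.conjTranspose_mul, (matLog2_isHermitian hA).eq,
      Matrix.diagonal_conjTranspose] at h
    rw [Matrix.star_eq_conjTranspose, h]
    congr 2
    funext i
    simp
  have hA2 : A = U * Matrix.diagonal (fun i => (a i : ℂ)) * star U := by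
    rw [← hAU, mul_assoc, hU1, mul_one]
  have key : star U * (matLog2 A - matLog2 B) * V
      = Matrix.of fun i j => (star U * V) i j *
        ((Real.logb 2 (a i) - Real.logb 2 (b j) : ℝ) : ℂ) := by
    rw [mul_sub, sub_mul, hLA', mul_assoc, mul_assoc, hLB, ← mul_assoc (star U)]
    ext i j
    rw [Matrix.sub_apply, Matrix.diagonal_mul, Matrix.mul_diagonal, Matrix.of_apply]
    push_cast
    ring
  have htr : (A * (matLog2 A - matLog2 B)).trace
      = (Matrix.diagonal (fun i => (a i : ℂ)) *
        ((star U * (matLog2 A - matLog2 B) * V) * star (star U * V))).trace := by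
    rw [star_mul, star_star]
    generalize matLog2 A - matLog2 B = L
    conv_lhs => rw [hA2]
    rw [mul_assoc, mul_assoc, Matrix.trace_mul_comm, mul_assoc, mul_assoc, mul_assoc (star U) _ V,
      mul_assoc (star U), mul_assoc _ V, ← mul_assoc V, hV1, one_mul]
  rw [qRelEnt, htr, key, Matrix.trace, Complex.re_sum]
  refine Finset.sum_congr rfl fun i _ => ?_
  rw [Matrix.diag_apply, Matrix.diagonal_mul, Matrix.mul_apply, Finset.mul_sum, Complex.re_sum]
  refine Finset.sum_congr rfl fun j _ => ?_
  rw [Matrix.of_apply, Matrix.star_apply, mul_right_comm ((star U * V) i j),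
    Complex.star_def, Complex.mul_conj']
  rw [← Complex.ofReal_re (a i * ‖(star U * V) i j‖ ^ 2 * _)]
  congr 1
  push_cast
  ring

end LogCalculus

section Comparison

variable {m : Type*} [Fintype m] [DecidableEq m]

lemma star_dotProduct_mulVec_eigenbasis {A U : Matrix m m ℂ} {a : m → ℝ}
    (hU : U ∈ Matrix.unitaryGroup m ℂ)
    (hAU : A * U = U * Matrix.diagonal (fun i => (a i : ℂ))) (y : m → ℂ) :
    star y ⬝ᵥ A.mulVec y = ((∑ i, a i * ‖(star U).mulVec y i‖ ^ 2 : ℝ) : ℂ) := by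
  have hA2 : A = U * (Matrix.diagonal (fun i => (a i : ℂ)) * star U) := by
    rw [← mul_assoc, ← hAU, mul_assoc, Matrix.mem_unitaryGroup_iff.mp hU, mul_one]
  conv_lhs => rw [hA2]
  rw [← Matrix.mulVec_mulVec, Matrix.dotProduct_mulVec, ← Matrix.mulVec_mulVec]
  have h : Matrix.vecMul (star y) U = star ((star U).mulVec y) := by
    rw [Matrix.star_mulVec, Matrix.star_eq_conjTranspose, Matrix.conjTranspose_conjTranspose]
  rw [h, dotProduct]
  push_cast
  refine Finset.sum_congr rfl fun i _ => ?_
  rw [Matrix.mulVec_diagonal, Pi.star_apply, Complex.star_def, ← Complex.conj_mul']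
  ring

/-- If `A ≤ N • B` then `S(A, B) ≤ log N`. -/
lemma qRelEnt_le_logb {A B : Matrix m m ℂ} (hA : IsDensity A) (hB : B.PosSemidef) {N : ℝ}
    (hN : 0 < N) (hAB : ((N : ℂ) • B - A).PosSemidef) : qRelEnt A B ≤ Real.logb 2 N := by
  obtain ⟨U, hU, hAU⟩ := exists_eigenbasis hA.1.isHermitian
  obtain ⟨V, hV, hBV⟩ := exists_eigenbasis hB.isHermitian
  rw [qRelEnt_eq_sum hA.1.isHermitian hB.isHermitian hU hV hAU hBV]
  set a := hA.1.isHermitian.eigenvalues with ha_def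
  set b := hB.isHermitian.eigenvalues with hb_def
  have ha : ∀ i, 0 ≤ a i := hA.1.eigenvalues_nonneg
  have hb : ∀ i, 0 ≤ b i := hB.eigenvalues_nonneg
  have hsum : ∑ i, a i = 1 := by
    have h := hA.1.isHermitian.trace_eq_sum_eigenvalues
    have h' : ((∑ i, a i : ℝ) : ℂ) = 1 := by
      rw [← hA.2, h]
      push_cast
      rfl
    exact_mod_cast h'
  set W := star U * V with hW_def
  have hW : W ∈ Matrix.unitaryGroup m ℂ := mul_mem (Unitary.star_mem hU) hV
  have hrow := sum_norm_sq_row hW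
  have hquad : ∀ (w : m → ℂ) (i : m),
      a i * ‖W.mulVec w i‖ ^ 2 ≤ N * ∑ j, b j * ‖w j‖ ^ 2 := by
    intro w i
    have h := hAB.dotProduct_mulVec_nonneg (V.mulVec w)
    rw [Matrix.sub_mulVec, dotProduct_sub, Matrix.smul_mulVec, dotProduct_smul,
      star_dotProduct_mulVec_eigenbasis hU hAU, star_dotProduct_mulVec_eigenbasis hV hBV,
      Matrix.mulVec_mulVec, Matrix.mulVec_mulVec, Matrix.mem_unitaryGroup_iff'.mp hV,
      Matrix.one_mulVec, smul_eq_mul, ← Complex.ofReal_mul, ← Complex.ofReal_sub,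
      Complex.zero_le_real] at h
    refine le_trans ?_ (sub_nonneg.mp h)
    exact Finset.single_le_sum (f := fun i => a i * ‖W.mulVec w i‖ ^ 2)
      (fun i _ => mul_nonneg (ha i) (sq_nonneg _)) (Finset.mem_univ i)
  have hzero : ∀ i j, 0 < a i → b j = 0 → ‖W i j‖ ^ 2 = 0 := by
    intro i j hi hj
    have h := hquad (Pi.single j 1) i
    have h0 : ∑ k, b k * ‖(Pi.single j (1 : ℂ) : m → ℂ) k‖ ^ 2 = 0 := by
      refine Finset.sum_eq_zero fun k _ => ?_
      by_cases hk : k = j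
      · subst hk; simp [hj]
      · simp [hk]
    rw [h0, mul_zero, Matrix.mulVec_single_one, Matrix.col_apply] at h
    nlinarith [sq_nonneg ‖W i j‖]
  have hT : ∀ i, a i * ∑ j, ‖W i j‖ ^ 2 / b j ≤ N := by
    intro i
    set T := ∑ j, ‖W i j‖ ^ 2 / b j with hT_def
    have hT0 : 0 ≤ T := Finset.sum_nonneg fun j _ => div_nonneg (sq_nonneg _) (hb j)
    have h := hquad (fun j => star (W i j) / (b j : ℂ)) i
    have h1 : W.mulVec (fun j => star (W i j) / (b j : ℂ)) i = (T : ℂ) := by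
      rw [Matrix.mulVec, dotProduct, hT_def]
      push_cast
      refine Finset.sum_congr rfl fun j _ => ?_
      rw [mul_div_assoc', Complex.star_def, Complex.mul_conj']
    have h2 : ∑ j, b j * ‖star (W i j) / (b j : ℂ)‖ ^ 2 = T := by
      refine Finset.sum_congr rfl fun j _ => ?_
      rw [norm_div, norm_star, Complex.norm_real, Real.norm_of_nonneg (hb j), div_pow]
      rcases eq_or_ne (b j) 0 with hj | hj
      · simp [hj]
      · field_simp
    rw [h1, h2, Complex.norm_real, Real.norm_of_nonneg hT0] at h
    rcases hT0.eq_or_lt with h0 | h0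
    · rw [← h0, mul_zero]; exact hN.le
    · refine le_of_mul_le_mul_right ?_ h0
      linarith [h, mul_assoc (a i) T T, pow_two T, congrArg (a i * ·) (pow_two T)]
  have hln : 0 < Real.log 2 := Real.log_pos one_lt_two
  have hterm : ∀ i, ∑ j, a i * ‖W i j‖ ^ 2 * (Real.logb 2 (a i) - Real.logb 2 (b j))
      ≤ a i * Real.logb 2 N := by
    intro i
    rcases (ha i).eq_or_lt with hi | hi
    · simp [← hi]
    have hpoint : ∀ j, ‖W i j‖ ^ 2 * (Real.logb 2 (a i) - Real.logb 2 (b j)) ≤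
        ‖W i j‖ ^ 2 * Real.logb 2 N + (‖W i j‖ ^ 2 / b j * (a i / N) - ‖W i j‖ ^ 2)
          / Real.log 2 := by
      intro j
      rcases (hb j).eq_or_lt with hj | hj
      · simp [hzero i j hi hj.symm]
      · have h := Real.log_le_sub_one_of_pos (show 0 < a i / (N * b j) by positivity)
        rw [Real.log_div hi.ne' (by positivity), Real.log_mul hN.ne' hj.ne'] at h
        have h2 : (Real.logb 2 (a i) - Real.logb 2 (b j)) ≤
            Real.logb 2 N + (a i / (N * b j) - 1) / Real.log 2 := by
          simp only [Real.logb]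
          rw [← sub_div, ← add_div]
          gcongr
          linarith
        refine (mul_le_mul_of_nonneg_left h2 (sq_nonneg _)).trans_eq ?_
        field_simp
    calc ∑ j, a i * ‖W i j‖ ^ 2 * (Real.logb 2 (a i) - Real.logb 2 (b j))
        = a i * ∑ j, ‖W i j‖ ^ 2 * (Real.logb 2 (a i) - Real.logb 2 (b j)) := by
          rw [Finset.mul_sum]; simp only [mul_assoc]
      _ ≤ a i * Real.logb 2 N := by
          refine mul_le_mul_of_nonneg_left ((Finset.sum_le_sum fun j _ => hpoint j).trans ?_) hi.le
          rw [Finset.sum_add_distrib, ← Finset.sum_mul, hrow, one_mul, ← Finset.sum_div,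
            Finset.sum_sub_distrib, ← Finset.sum_mul, hrow]
          have h3 : (∑ j, ‖W i j‖ ^ 2 / b j) * (a i / N) ≤ 1 := by
            rw [mul_div_assoc', div_le_one hN, mul_comm]
            exact hT i
          have h4 : ((∑ j, ‖W i j‖ ^ 2 / b j) * (a i / N) - 1) / Real.log 2 ≤ 0 :=
            div_nonpos_of_nonpos_of_nonneg (by linarith) hln.le
          linarith
  calc _ ≤ ∑ i, a i * Real.logb 2 N := Finset.sum_le_sum fun i _ => hterm i
    _ = Real.logb 2 N := by rw [← Finset.sum_mul, hsum, one_mul]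

end Comparison

section Pinching

variable {m ι : Type*} [Fintype m] [DecidableEq m] [Fintype ι]

/-- Pinching inequality: `R` is at most the number of projections times its pinching. -/
lemma pinching_posSemidef {R : Matrix m m ℂ} (hR : R.PosSemidef) {P : ι → Matrix m m ℂ}
    (hP : ∀ c, (P c).IsHermitian) (hsum : ∑ c, P c = 1) :
    ((Fintype.card ι : ℂ) • ∑ c, P c * R * P c - R).PosSemidef := by
  have h : (Fintype.card ι : ℂ) • ∑ c, P c * R * P c - R
      = (1 / 2 : ℝ) • ∑ c, ∑ c', (P c - P c') * R * (P c - P c').conjTranspose := by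
    have h1 : ∑ c, ∑ c', (P c - P c') * R * (P c - P c').conjTranspose
        = (2 : ℝ) • ((Fintype.card ι : ℂ) • ∑ c, P c * R * P c - R) := by
      have h2 : ∀ c c', (P c - P c') * R * (P c - P c').conjTranspose
          = P c * R * P c - P c * R * P c' - P c' * R * P c + P c' * R * P c' := by
        intro c c'
        rw [Matrix.conjTranspose_sub, (hP c).eq, (hP c').eq]
        noncomm_ring
      simp only [h2, Finset.sum_add_distrib, Finset.sum_sub_distrib, ← Finset.mul_sum,
        ← Finset.sum_mul, hsum, Finset.sum_const, Finset.card_univ, mul_one, one_mul, two_smul,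
        Nat.cast_smul_eq_nsmul]
      simp only [mul_smul_comm, ← Finset.smul_sum]
      abel
    rw [h1, smul_smul]
    norm_num
  rw [h]
  refine Matrix.PosSemidef.smul ?_ (by norm_num)
  exact Matrix.posSemidef_sum _ fun c _ => Matrix.posSemidef_sum _ fun c' _ =>
    hR.mul_mul_conjTranspose_same _

lemma trace_pinching_mul {R L : Matrix m m ℂ} {P : ι → Matrix m m ℂ}
    (hidem : ∀ c, P c * P c = P c) (hsum : ∑ c, P c = 1) (hL : ∀ c, Commute L (P c)) :
    ((∑ c, P c * R * P c) * L).trace = (R * L).trace := by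
  have h : ∀ c, (P c * R * P c * L).trace = (R * (L * P c)).trace := by
    intro c
    rw [mul_assoc, mul_assoc, Matrix.trace_mul_comm, mul_assoc, mul_assoc, ← mul_assoc (P c),
      ← (hL c).eq, mul_assoc L, hidem]
  rw [Finset.sum_mul, Matrix.trace_sum, Finset.sum_congr rfl fun c _ => h c, ← Matrix.trace_sum,
    ← Finset.mul_sum, ← Finset.mul_sum, hsum, mul_one]

lemma commute_pinching [DecidableEq ι] {R : Matrix m m ℂ} {P : ι → Matrix m m ℂ}
    (hidem : ∀ c, P c * P c = P c) (horth : ∀ c c', c ≠ c' → P c * P c' = 0) (c : ι) :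
    Commute (∑ c, P c * R * P c) (P c) := by
  have h1 : (∑ c, P c * R * P c) * P c = P c * R * P c := by
    rw [Finset.sum_mul, Finset.sum_eq_single c, mul_assoc, hidem]
    · intro c' _ hc
      rw [mul_assoc, horth c' c hc, mul_zero]
    · simp
  have h2 : P c * (∑ c, P c * R * P c) = P c * R * P c := by
    rw [Finset.mul_sum, Finset.sum_eq_single c, ← mul_assoc, ← mul_assoc, hidem]
    · intro c' _ hc
      rw [← mul_assoc, ← mul_assoc, horth c c' hc.symm, zero_mul, zero_mul]
    · simp
  rw [commute_iff_eq, h1, h2]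

/-- Hiai–Petz identity for the pinching by projections commuting with the second argument. -/
lemma qRelEnt_pinching_add [DecidableEq ι] {R S : Matrix m m ℂ} (hR : R.IsHermitian)
    (hS : S.IsHermitian) {P : ι → Matrix m m ℂ} (hP : ∀ c, (P c).IsHermitian)
    (hidem : ∀ c, P c * P c = P c) (horth : ∀ c c', c ≠ c' → P c * P c' = 0)
    (hsum : ∑ c, P c = 1) (hSP : ∀ c, Commute S (P c)) :
    qRelEnt (∑ c, P c * R * P c) S + qRelEnt R (∑ c, P c * R * P c) = qRelEnt R S := by
  have hM : (∑ c, P c * R * P c).IsHermitian := by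
    rw [Matrix.IsHermitian, Matrix.conjTranspose_sum]
    refine Finset.sum_congr rfl fun c _ => ?_
    rw [Matrix.conjTranspose_mul, Matrix.conjTranspose_mul, (hP c).eq, hR.eq, mul_assoc]
  have h := trace_pinching_mul (R := R)
    (L := matLog2 (∑ c, P c * R * P c) - matLog2 S) hidem hsum fun c =>
      (matLog2_commute hM (commute_pinching hidem horth c)).sub_left (matLog2_commute hS (hSP c))
  rw [qRelEnt, h, qRelEnt, qRelEnt, ← Complex.add_re, ← Matrix.trace_add, ← mul_add]
  congr 4
  abel

lemma eq_of_trace_mul_eq {D : Subalgebra ℂ (Matrix m m ℂ)} {X Y : Matrix m m ℂ}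
    (hX : X ∈ D) (hY : Y ∈ D) (hXh : X.IsHermitian) (hYh : Y.IsHermitian)
    (h : ∀ b ∈ D, (X * b).trace = (Y * b).trace) : X = Y := by
  have h1 : ((X - Y).conjTranspose * (X - Y)).trace = 0 := by
    rw [(hXh.sub hYh).eq, sub_mul, Matrix.trace_sub, h _ (sub_mem hX hY), sub_self]
  exact sub_eq_zero.mp (Matrix.trace_conjTranspose_mul_self_eq_zero_iff.mp h1)

end Pinching

section TensorProduct

variable {n κ : Type*} [Fintype n]

/-- Tensor product of a family of matrices, on the index set `n → κ`. -/
noncomputable def tensorFamily (A : n → Matrix κ κ ℂ) : Matrix (n → κ) (n → κ) ℂ :=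
  Matrix.of fun x y => ∏ j, A j (x j) (y j)

lemma tensorFamily_mul [DecidableEq n] [Fintype κ] (A B : n → Matrix κ κ ℂ) :
    tensorFamily A * tensorFamily B = tensorFamily fun j => A j * B j := by
  ext x y
  simp only [tensorFamily, Matrix.mul_apply, Matrix.of_apply, ← Finset.prod_mul_distrib]
  rw [Finset.prod_univ_sum, Fintype.piFinset_univ]

lemma tensorFamily_one [DecidableEq κ] : tensorFamily (fun _ : n => (1 : Matrix κ κ ℂ)) = 1 := by
  ext x y
  simp only [tensorFamily, Matrix.of_apply, Matrix.one_apply]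
  rw [Fintype.prod_ite_zero]
  simp [funext_iff]

lemma tensorFamily_conjTranspose (A : n → Matrix κ κ ℂ) :
    (tensorFamily A).conjTranspose = tensorFamily fun j => (A j).conjTranspose := by
  ext x y
  simp [tensorFamily, Matrix.conjTranspose_apply]

lemma tensorFamily_smul (s : n → ℂ) (A : n → Matrix κ κ ℂ) :
    tensorFamily (fun j => s j • A j) = (∏ j, s j) • tensorFamily A := by
  ext x y
  simp [tensorFamily, Finset.prod_mul_distrib]

lemma tensorFamily_eq_zero {A : n → Matrix κ κ ℂ} {j : n} (h : A j = 0) : tensorFamily A = 0 := by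
  ext x y
  simp only [tensorFamily, Matrix.of_apply, Matrix.zero_apply]
  exact Finset.prod_eq_zero (Finset.mem_univ j) (by simp [h])

lemma sum_tensorFamily [DecidableEq n] {ι : Type*} [Fintype ι] (A : ι → Matrix κ κ ℂ) :
    ∑ i : n → ι, tensorFamily (fun j => A (i j)) = tensorFamily fun _ => ∑ k, A k := by
  ext x y
  simp only [tensorFamily, Matrix.sum_apply, Matrix.of_apply]
  rw [Finset.prod_univ_sum, Fintype.piFinset_univ]

lemma tensorFamily_diagonal [DecidableEq κ] (a : κ → ℂ) :
    tensorFamily (fun _ : n => Matrix.diagonal a) = Matrix.diagonal fun x => ∏ j, a (x j) := by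
  ext x y
  simp only [tensorFamily, Matrix.of_apply, Matrix.diagonal_apply]
  rw [Fintype.prod_ite_zero]
  simp [funext_iff]

lemma tensorFamily_mem_unitaryGroup [DecidableEq n] [Fintype κ] [DecidableEq κ] {U : Matrix κ κ ℂ} (hU : U ∈ Matrix.unitaryGroup κ ℂ) :
    tensorFamily (fun _ : n => U) ∈ Matrix.unitaryGroup (n → κ) ℂ := by
  rw [Matrix.mem_unitaryGroup_iff, Matrix.star_eq_conjTranspose, tensorFamily_conjTranspose,
    tensorFamily_mul, ← Matrix.star_eq_conjTranspose, Matrix.mem_unitaryGroup_iff.mp hU,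
    tensorFamily_one]

lemma tensorFamily_isDensity [DecidableEq n] [Fintype κ] {ρ : Matrix κ κ ℂ} (hρ : IsDensity ρ) :
    IsDensity (tensorFamily fun _ : n => ρ) := by
  constructor
  · obtain ⟨U, hU, hρU⟩ := exists_eigenbasis hρ.1.isHermitian
    have h := congrArg (· * U.conjTranspose) hρU
    rw [mul_assoc, ← Matrix.star_eq_conjTranspose, Matrix.mem_unitaryGroup_iff.mp hU, mul_one,
      Matrix.star_eq_conjTranspose] at h
    rw [h, ← tensorFamily_mul, ← tensorFamily_mul, ← tensorFamily_conjTranspose,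
      tensorFamily_diagonal]
    refine Matrix.PosSemidef.mul_mul_conjTranspose_same (Matrix.PosSemidef.diagonal fun x => ?_) _
    exact Finset.prod_nonneg fun j _ => Complex.zero_le_real.mpr (hρ.1.eigenvalues_nonneg _)
  · simp only [tensorFamily, Matrix.trace, Matrix.diag_apply, Matrix.of_apply]
    have h := Finset.prod_univ_sum (fun _ : n => (Finset.univ : Finset κ)) fun _ i => ρ i i
    rw [Fintype.piFinset_univ] at h
    rw [← h]
    have h1 : ∑ i, ρ i i = 1 := hρ.2
    simp [h1]

/-- Additivity of expectations over a product distribution. -/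
lemma sum_prod_mul_sum [DecidableEq n] {ι : Type*} [Fintype ι] {q : ι → ℝ} (hq : ∑ i, q i = 1) (f : ι → ℝ) :
    ∑ z : n → ι, (∏ j, q (z j)) * ∑ k, f (z k) = Fintype.card n * ∑ i, q i * f i := by
  have h : ∀ k : n, ∑ z : n → ι, (∏ j, q (z j)) * f (z k) = ∑ i, q i * f i := by
    intro k
    have h1 : ∀ z : n → ι, (∏ j, q (z j)) * f (z k)
        = ∏ j, (q (z j) * if j = k then f (z j) else 1) := by
      intro z
      rw [Finset.prod_mul_distrib]
      simp
    rw [Finset.sum_congr rfl fun z _ => h1 z]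
    have h2 := Finset.prod_univ_sum (fun _ : n => (Finset.univ : Finset ι))
      fun j i => q i * if j = k then f i else 1
    rw [Fintype.piFinset_univ] at h2
    rw [← h2, Finset.prod_eq_single k]
    · simp
    · intro j _ hj
      simp [hj, hq]
    · simp
  simp only [Finset.mul_sum]
  rw [Finset.sum_comm, Finset.sum_congr rfl fun k _ => h k]
  simp [Finset.mul_sum]

/-- Additivity of the relative entropy on tensor powers. -/
lemma qRelEnt_tensorFamily [DecidableEq n] [Fintype κ] [DecidableEq κ] {ρ σ : Matrix κ κ ℂ} (hρ : IsDensity ρ) (hσ : IsDensity σ)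
    (hsupp : SuppLe ρ σ) :
    qRelEnt (tensorFamily fun _ : n => ρ) (tensorFamily fun _ : n => σ)
      = Fintype.card n * qRelEnt ρ σ := by
  obtain ⟨U, hU, hAU⟩ := exists_eigenbasis hρ.1.isHermitian
  obtain ⟨V, hV, hBV⟩ := exists_eigenbasis hσ.1.isHermitian
  have ha : ∀ i, 0 ≤ hρ.1.isHermitian.eigenvalues i := hρ.1.eigenvalues_nonneg
  have hasum := hρ.1.isHermitian.trace_eq_sum_eigenvalues
  have htr : ρ.trace = 1 := hρ.2
  generalize hρ.1.isHermitian.eigenvalues = a at hAU ha hasum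
  generalize hσ.1.isHermitian.eigenvalues = b at hBV
  have hsum : ∑ i, a i = 1 := by
    have h' : ((∑ i, a i : ℝ) : ℂ) = 1 := by
      rw [← htr, hasum]
      push_cast
      rfl
    exact_mod_cast h'
  set W := star U * V with hW_def
  have hW : W ∈ Matrix.unitaryGroup κ ℂ := mul_mem (Unitary.star_mem hU) hV
  have hzero : ∀ i j, b j = 0 → a i * ‖W i j‖ ^ 2 = 0 := by
    intro i j hj
    have h1 : σ.mulVec (V.mulVec (Pi.single j 1)) = 0 := by
      rw [Matrix.mulVec_mulVec, hBV, ← Matrix.mulVec_mulVec, Matrix.diagonal_mulVec_single, hj]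
      simp
    have h2 := star_dotProduct_mulVec_eigenbasis hU hAU (V.mulVec (Pi.single j 1))
    rw [hsupp _ h1, dotProduct_zero, Matrix.mulVec_mulVec, ← hW_def, Matrix.mulVec_single_one,
      eq_comm, Complex.ofReal_eq_zero,
      Finset.sum_eq_zero_iff_of_nonneg fun i _ => mul_nonneg (ha i) (sq_nonneg _)] at h2
    exact h2 i (Finset.mem_univ i)
  have hlift : ∀ {A X : Matrix κ κ ℂ} {c : κ → ℝ},
      A * X = X * Matrix.diagonal (fun i => (c i : ℂ)) →
      (tensorFamily fun _ : n => A) * (tensorFamily fun _ : n => X)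
        = (tensorFamily fun _ : n => X) *
          Matrix.diagonal (fun x => ((∏ j, c (x j) : ℝ) : ℂ)) := by
    intro A X c h
    rw [tensorFamily_mul, h, ← tensorFamily_mul, tensorFamily_diagonal]
    simp only [Complex.ofReal_prod]
  rw [qRelEnt_eq_sum (tensorFamily_isDensity hρ).1.isHermitian
    (tensorFamily_isDensity hσ).1.isHermitian (tensorFamily_mem_unitaryGroup hU)
    (tensorFamily_mem_unitaryGroup hV) (hlift hAU) (hlift hBV),
    qRelEnt_eq_sum hρ.1.isHermitian hσ.1.isHermitian hU hV hAU hBV, ← hW_def,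
    Matrix.star_eq_conjTranspose, tensorFamily_conjTranspose, tensorFamily_mul,
    ← Matrix.star_eq_conjTranspose, ← hW_def]
  let q : κ × κ → ℝ := fun p => a p.1 * ‖W p.1 p.2‖ ^ 2
  have hq : ∑ p, q p = 1 := by
    rw [Fintype.sum_prod_type]
    simp only [q, ← Finset.mul_sum, sum_norm_sq_row hW, mul_one, hsum]
  have hmain := sum_prod_mul_sum (n := n) hq fun p => Real.logb 2 (a p.1) - Real.logb 2 (b p.2)
  rw [Fintype.sum_prod_type] at hmain
  rw [← hmain, ← (Equiv.arrowProdEquivProdArrow n (fun _ => κ) (fun _ => κ)).symm.sum_comp,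
    Fintype.sum_prod_type]
  refine Finset.sum_congr rfl fun x _ => Finset.sum_congr rfl fun y _ => ?_
  have hprod : (∏ j, a (x j)) * ‖(tensorFamily fun _ : n => W) x y‖ ^ 2
      = ∏ j, q (x j, y j) := by
    simp only [tensorFamily, Matrix.of_apply, norm_prod, q, Finset.prod_mul_distrib,
      Finset.prod_pow]
  change _ = (∏ j, q (x j, y j)) * ∑ k, (Real.logb 2 (a (x k)) - Real.logb 2 (b (y k)))
  rw [hprod]
  by_cases h0 : ∏ j, q (x j, y j) = 0
  · rw [h0, zero_mul, zero_mul]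
  · have hne := Finset.prod_ne_zero_iff.mp h0
    rw [Finset.sum_sub_distrib, Real.logb_prod, Real.logb_prod]
    · exact fun j hj hb => hne j hj (hzero _ _ hb)
    · exact fun j hj ha0 => hne j hj (by simp [q, ha0])

end TensorProduct

section SpectralProjections

variable {d : ℕ} {e : Fin d → Matrix (Fin d) (Fin d) ℂ}

/-- The composition of `l` recording the multiplicities of the values of `i`. -/
noncomputable def composition {d l : ℕ} (i : Fin l → Fin d) : Fin d → Fin (l + 1) := fun k =>
  ⟨(Finset.univ.filter fun j => i j = k).card,
    Nat.lt_succ_of_le ((Finset.card_filter_le _ _).trans_eq (Finset.card_fin l))⟩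

lemma specProj_eq_sum (e : Fin d → Matrix (Fin d) (Fin d) ℂ) (l : ℕ) (c : Fin d → Fin (l + 1)) :
    specProj e l c = ∑ i ∈ Finset.univ.filter (fun i : Fin l → Fin d => composition i = c),
      tensorFamily fun j => e (i j) := by
  rw [specProj]
  refine Finset.sum_congr ?_ fun _ _ => rfl
  ext i
  simp [composition, funext_iff, Fin.ext_iff]

lemma sum_specProj (hsum : ∑ i, e i = 1) (l : ℕ) : ∑ c, specProj e l c = 1 := by
  simp only [specProj_eq_sum]
  rw [Finset.sum_fiberwise, sum_tensorFamily, hsum, tensorFamily_one]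

lemma specProj_isHermitian (he : ∀ i, IsProjn (e i)) (l : ℕ) (c : Fin d → Fin (l + 1)) :
    (specProj e l c).IsHermitian := by
  rw [specProj_eq_sum, Matrix.IsHermitian, Matrix.conjTranspose_sum]
  refine Finset.sum_congr rfl fun i _ => ?_
  rw [tensorFamily_conjTranspose]
  simp only [(he _).1.eq]

lemma tensorFamily_proj_mul (he : ∀ i, IsProjn (e i)) (horth : ∀ i j, i ≠ j → e i * e j = 0)
    {l : ℕ} (i i' : Fin l → Fin d) :
    tensorFamily (fun j => e (i j)) * tensorFamily (fun j => e (i' j))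
      = if i = i' then tensorFamily (fun j => e (i j)) else 0 := by
  rw [tensorFamily_mul]
  split_ifs with h
  · simp only [← h, (he _).2]
  · obtain ⟨j, hj⟩ := Function.ne_iff.mp h
    exact tensorFamily_eq_zero (j := j) (horth _ _ hj)

lemma specProj_mul_specProj (he : ∀ i, IsProjn (e i)) (horth : ∀ i j, i ≠ j → e i * e j = 0)
    {l : ℕ} (c c' : Fin d → Fin (l + 1)) :
    specProj e l c * specProj e l c' = if c = c' then specProj e l c else 0 := by
  simp only [specProj_eq_sum, Finset.sum_mul_sum, tensorFamily_proj_mul he horth,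
    Finset.sum_ite_eq, Finset.mem_filter, Finset.mem_univ, true_and]
  split_ifs with h
  · subst h
    exact Finset.sum_congr rfl fun i hi => if_pos (Finset.mem_filter.mp hi).2
  · refine Finset.sum_eq_zero fun i hi => if_neg fun hi' => h ?_
    rw [← (Finset.mem_filter.mp hi).2, hi']

lemma tpow_mul_specProj {σ : Matrix (Fin d) (Fin d) ℂ} {lam : Fin d → ℝ}
    (he : ∀ i, IsProjn (e i)) (horth : ∀ i j, i ≠ j → e i * e j = 0)
    (hspec : σ = ∑ i, (lam i : ℂ) • e i) (l : ℕ) (c : Fin d → Fin (l + 1)) :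
    tpow σ l * specProj e l c = (∏ k, (lam k : ℂ) ^ (c k : ℕ)) • specProj e l c := by
  have h1 : ∀ k, σ * e k = (lam k : ℂ) • e k := by
    intro k
    rw [hspec, Finset.sum_mul, Finset.sum_eq_single k]
    · rw [smul_mul_assoc, (he k).2]
    · intro i _ hi
      rw [smul_mul_assoc, horth i k hi, smul_zero]
    · simp
  rw [specProj_eq_sum, Finset.mul_sum, Finset.smul_sum]
  refine Finset.sum_congr rfl fun i hi => ?_
  change tensorFamily (fun _ => σ) * _ = _
  rw [tensorFamily_mul]
  simp only [h1]
  rw [tensorFamily_smul, ← (Finset.mem_filter.mp hi).2]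
  congr 1
  rw [← Finset.prod_fiberwise (s := Finset.univ) (g := i)]
  refine Finset.prod_congr rfl fun k _ => ?_
  rw [Finset.prod_congr rfl (g := fun _ => (lam k : ℂ)), Finset.prod_const]
  · rfl
  · intro j hj
    rw [(Finset.mem_filter.mp hj).2]

end SpectralProjections

/-- Hiai–Petz lower bound: the relative entropy of the restrictions of `ρ^{⊗l}`, `σ^{⊗l}`
to the abelian algebra `D_{l,ρ}` (expressed via the densities `Dψ, Dφ ∈ D_{l,ρ}` of the
restricted states) is at least `l·S(ρ,σ) − d·log(l+1)`. -/
theorem restricted_rel_entropy_lower_bound (d : ℕ) (ρ σ : Matrix (Fin d) (Fin d) ℂ)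
    (hρ : IsDensity ρ) (hσ : IsDensity σ) (hsupp : SuppLe ρ σ)
    (e : Fin d → Matrix (Fin d) (Fin d) ℂ) (lam : Fin d → ℝ)
    (he : ∀ i, IsProjn (e i)) (horth : ∀ i j, i ≠ j → e i * e j = 0)
    (hsum : ∑ i, e i = 1) (hspec : σ = ∑ i, (lam i : ℂ) • e i) (l : ℕ)
    (Dψ Dφ : Matrix (Fin l → Fin d) (Fin l → Fin d) ℂ)
    (hDψmem : Dψ ∈ pinchAlg e ρ l) (hDφmem : Dφ ∈ pinchAlg e ρ l)
    (hDψ : IsDensity Dψ) (hDφ : IsDensity Dφ)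
    (hψ : ∀ b ∈ pinchAlg e ρ l, (Dψ * b).trace = (tpow ρ l * b).trace)
    (hφ : ∀ b ∈ pinchAlg e ρ l, (Dφ * b).trace = (tpow σ l * b).trace) :
    l * qRelEnt ρ σ - d * Real.logb 2 (l + 1) ≤ qRelEnt Dψ Dφ := by
  set P : (Fin d → Fin (l + 1)) → Matrix (Fin l → Fin d) (Fin l → Fin d) ℂ := specProj e l
    with hP_def
  have hP : ∀ c, (P c).IsHermitian := specProj_isHermitian he l
  have hidem : ∀ c, P c * P c = P c := fun c => by
    simpa using specProj_mul_specProj he horth c c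
  have hPorth : ∀ c c', c ≠ c' → P c * P c' = 0 := fun c c' h => by
    simpa [h] using specProj_mul_specProj he horth c c'
  have hPsum : ∑ c, P c = 1 := sum_specProj hsum l
  have hR : IsDensity (tpow ρ l) := tensorFamily_isDensity hρ
  have hS : IsDensity (tpow σ l) := tensorFamily_isDensity hσ
  have hSP : ∀ c, Commute (tpow σ l) (P c) := by
    intro c
    have h := tpow_mul_specProj he horth hspec l c
    have h' := congrArg Matrix.conjTranspose h
    rw [Matrix.conjTranspose_mul, Matrix.conjTranspose_smul, (specProj_isHermitian he l c).eq,
      hS.1.isHermitian.eq] at h'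
    rw [commute_iff_eq, hP_def, h, h']
    congr 1
    simp
  have hPmem : ∀ c, P c ∈ pinchAlg e ρ l := fun c =>
    Algebra.subset_adjoin (Or.inl ⟨c, rfl⟩)
  have hcomm : ∀ b ∈ pinchAlg e ρ l, ∀ c, Commute b (P c) := by
    intro b hb c
    induction hb using Algebra.adjoin_induction with
    | mem x hx =>
      have hPP : ∀ c', Commute (P c') (P c) := fun c' => by
        rcases eq_or_ne c' c with h | h
        · rw [h]
        · rw [commute_iff_eq, hPorth c' c h, hPorth c c' h.symm]
      rcases hx with ⟨c', rfl⟩ | ⟨c', rfl⟩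
      · exact hPP c'
      · change Commute (P c' * tpow ρ l * P c') (P c)
        rcases eq_or_ne c' c with h | h
        · rw [commute_iff_eq, h, mul_assoc _ (P c), hidem, ← mul_assoc, ← mul_assoc, hidem]
        · rw [commute_iff_eq, mul_assoc _ (P c'), hPorth c' c h, ← mul_assoc, ← mul_assoc,
            hPorth c c' h.symm, mul_zero, zero_mul, zero_mul]
    | algebraMap r => exact Algebra.commutes r _
    | add x y _ _ hx hy => exact hx.add_left hy
    | mul x y _ _ hx hy => exact hx.mul_left hy
  have hφeq : Dφ = tpow σ l := by
    refine eq_of_trace_mul_eq hDφmem ?_ hDφ.1.isHermitian hS.1.isHermitian hφ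
    rw [← mul_one (tpow σ l), ← hPsum, Finset.mul_sum]
    refine sum_mem fun c _ => ?_
    rw [hP_def, tpow_mul_specProj he horth hspec l c]
    exact Subalgebra.smul_mem _ (hPmem c) _
  set M := ∑ c, P c * tpow ρ l * P c with hM_def
  have hM : M.PosSemidef := Matrix.posSemidef_sum _ fun c _ => by
    simpa only [(hP c).eq] using hR.1.mul_mul_conjTranspose_same (P c)
  have hψeq : Dψ = M := by
    refine eq_of_trace_mul_eq hDψmem ?_ hDψ.1.isHermitian hM.isHermitian fun b hb => ?_
    · exact sum_mem fun c _ => Algebra.subset_adjoin (Or.inr ⟨c, rfl⟩)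
    · rw [hψ b hb, hM_def, trace_pinching_mul hidem hPsum (hcomm b hb)]
  have hadd : qRelEnt (tpow ρ l) (tpow σ l) = l * qRelEnt ρ σ := by
    have h := qRelEnt_tensorFamily (n := Fin l) hρ hσ hsupp
    rwa [Fintype.card_fin] at h
  have hpinch : qRelEnt (tpow ρ l) M ≤ d * Real.logb 2 (l + 1) := by
    have hcard : (Fintype.card (Fin d → Fin (l + 1)) : ℝ) = ((l : ℝ) + 1) ^ d := by
      simp
    rw [← Real.logb_pow, ← hcard]
    refine qRelEnt_le_logb hR hM (by rw [hcard]; positivity) ?_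
    rw [Complex.ofReal_natCast]
    exact pinching_posSemidef hR.1 hP hPsum
  have hid := qRelEnt_pinching_add hR.1.isHermitian hS.1.isHermitian hP hidem hPorth hPsum hSP
  rw [hφeq, hψeq, ← hadd, ← hid]
  linarith
end
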